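/- arXiv:1710.05585 — 3 statements merged into one kernel-verified Lean document; each statement's English description precedes it below -/
import Mathlib

section
/- For every class-K∞ function σ : [0,∞) → [0,∞) there exists a class-K∞ function σ̂ such that σ̂(s) ≤ σ(s) for all s ≥ 0 and the function s ↦ s − σ̂(s) is a class-K function. -/
/-!
If `σ` is of class K, then `id + σ` is of class K∞, so it has an inverse `τ` of class K∞. The
identity `τ s + σ (τ s) = s` splits `s` into two class-K functions of `s`: `σ̂ = σ ∘ τ` and
`s - σ̂ s = τ s`. It also gives `τ s ≤ s`, whence `σ̂ ≤ σ`.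
-/

open Filter

/-- A class-K function: continuous, strictly increasing on `[0,∞)`, and vanishing at `0`. -/
def ClassK (f : ℝ → ℝ) : Prop :=
  ContinuousOn f (Set.Ici 0) ∧ StrictMonoOn f (Set.Ici 0) ∧ f 0 = 0

/-- A class-K∞ function: a class-K function that is unbounded. -/
def ClassKInf (f : ℝ → ℝ) : Prop :=
  ClassK f ∧ Tendsto f atTop atTop

open Set

theorem continuousOn_of_strictMonoOn_of_bijOn {α β : Type*} [LinearOrder α] [TopologicalSpace α]
    [OrderTopology α] [LinearOrder β] [TopologicalSpace β] [OrderTopology β] {f : α → β}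
    {s : Set α} {t : Set β} [OrdConnected s] [OrdConnected t] (hmono : StrictMonoOn f s)
    (hbij : BijOn f s t) : ContinuousOn f s := by
  let e : s ≃o t := StrictMono.orderIsoOfSurjective (hbij.mapsTo.restrict f s t)
    (fun x y hxy => hmono x.2 y.2 hxy) (hbij.mapsTo.restrict_surjective_iff.2 hbij.surjOn)
  exact continuousOn_iff_continuous_domRestrict.2 (continuous_subtype_val.comp e.continuous)

theorem ClassK.mapsTo {f : ℝ → ℝ} (hf : ClassK f) : MapsTo f (Ici 0) (Ici 0) := by
  obtain ⟨-, hmono, hzero⟩ := hf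
  simpa only [hzero] using hmono.monotoneOn.mapsTo_Ici

theorem ClassK.congr {f g : ℝ → ℝ} (hf : ClassK f) (hfg : EqOn f g (Ici 0)) : ClassK g :=
  ⟨hf.1.congr hfg.symm, hf.2.1.congr hfg, (hfg self_mem_Ici).symm.trans hf.2.2⟩

theorem ClassK.id_add {f : ℝ → ℝ} (hf : ClassK f) : ClassKInf (fun s => s + f s) := by
  have ⟨hcont, hmono, hzero⟩ := hf
  refine ⟨⟨continuousOn_id.add hcont, strictMonoOn_id.add hmono, by simp [hzero]⟩, ?_⟩
  refine tendsto_atTop_mono' atTop ?_ tendsto_id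
  filter_upwards [eventually_ge_atTop 0] with s hs
  exact le_add_of_nonneg_right (hf.mapsTo hs)

theorem ClassKInf.bijOn {f : ℝ → ℝ} (hf : ClassKInf f) : BijOn f (Ici 0) (Ici 0) := by
  obtain ⟨hK, htop⟩ := hf
  refine ⟨hK.mapsTo, hK.2.1.injOn, ?_⟩
  simpa only [SurjOn, hK.2.2] using intermediate_value_Ici hK.1 htop

theorem ClassKInf.of_strictMonoOn_of_bijOn {f : ℝ → ℝ} (hmono : StrictMonoOn f (Ici 0))
    (hbij : BijOn f (Ici 0) (Ici 0)) : ClassKInf f := by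
  have hzero : f 0 = 0 := by
    obtain ⟨x, hx, hfx⟩ := hbij.surjOn self_mem_Ici
    exact le_antisymm (hfx ▸ hmono.monotoneOn self_mem_Ici hx hx) (hbij.mapsTo self_mem_Ici)
  refine ⟨⟨continuousOn_of_strictMonoOn_of_bijOn hmono hbij, hmono, hzero⟩, ?_⟩
  refine tendsto_atTop.2 fun b => ?_
  obtain ⟨x, hx, hfx⟩ := hbij.surjOn (le_max_right b 0)
  filter_upwards [eventually_ge_atTop x] with y hxy
  calc b ≤ max b 0 := le_max_left b 0
    _ = f x := hfx.symm
    _ ≤ f y := hmono.monotoneOn hx (le_trans hx hxy) hxy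

theorem ClassKInf.comp {f g : ℝ → ℝ} (hf : ClassKInf f) (hg : ClassKInf g) :
    ClassKInf (f ∘ g) :=
  ClassKInf.of_strictMonoOn_of_bijOn (hf.1.2.1.comp hg.1.2.1 hg.1.mapsTo) (hf.bijOn.comp hg.bijOn)

theorem ClassKInf.exists_invOn {f : ℝ → ℝ} (hf : ClassKInf f) :
    ∃ g, ClassKInf g ∧ InvOn g f (Ici 0) (Ici 0) := by
  have hinv : InvOn (Function.invFunOn f (Ici 0)) f (Ici 0) (Ici 0) := hf.bijOn.invOn_invFunOn
  have hbij : BijOn (Function.invFunOn f (Ici 0)) (Ici 0) (Ici 0) := hf.bijOn.symm hinv.symm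
  refine ⟨_, ClassKInf.of_strictMonoOn_of_bijOn (fun x hx y hy hxy => ?_) hbij, hinv⟩
  rwa [← hf.1.2.1.lt_iff_lt (hbij.mapsTo hx) (hbij.mapsTo hy), hinv.2 hx, hinv.2 hy]

/-- For every class-K∞ function `σ` there exists a class-K∞ function `σ̂` with
`σ̂ s ≤ σ s` for all `s ≥ 0` such that `s ↦ s - σ̂ s` is a class-K function. -/
theorem stmt_0 (σ : ℝ → ℝ) (hσ : ClassKInf σ) :
    ∃ σh : ℝ → ℝ, ClassKInf σh ∧ (∀ s ≥ (0:ℝ), σh s ≤ σ s) ∧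
      ClassK (fun s => s - σh s) := by
  obtain ⟨τ, hτ, hinv⟩ := hσ.1.id_add.exists_invOn
  have hsplit : ∀ s ≥ (0 : ℝ), τ s + σ (τ s) = s := fun s hs => hinv.2 hs
  refine ⟨σ ∘ τ, hσ.comp hτ, fun s hs => ?_, hτ.1.congr fun s hs => ?_⟩
  · have hτs : 0 ≤ τ s := hτ.1.mapsTo hs
    have hστs : 0 ≤ σ (τ s) := hσ.1.mapsTo hτs
    have hle : τ s ≤ s := by linarith [hsplit s hs]
    exact hσ.1.2.1.monotoneOn hτs hs hle
  · exact eq_sub_of_add_eq (hsplit s hs)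
end

section
/- Let ψ, σ̂ be class-K∞ functions such that s ↦ s − ψ(s) is class-K∞ and s ↦ s − σ̂(s) is class-K. Fix r ≥ 0 and set c := σ̂⁻¹(ψ⁻¹(r)). Then for every v with 0 ≤ v ≤ c one has v − σ̂(v) + r ≤ c; that is, the sublevel set {v : v ≤ c} is invariant under the update v ↦ v − σ̂(v) + r. -/
open Filter

/-- As `id - σ` is monotone, the update is largest at `v = c`, where it equals `c - σ c + r`. -/
theorem sub_add_le_of_monotoneOn_id_sub {α : Type*} [AddCommGroup α] [Preorder α]
    [IsOrderedAddMonoid α] {S : Set α} {σ : α → α} {v c r : α}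
    (hσ : MonotoneOn (fun s => s - σ s) S) (hv : v ∈ S) (hc : c ∈ S) (hvc : v ≤ c)
    (hr : r ≤ σ c) : v - σ v + r ≤ c :=
  calc
    v - σ v + r ≤ c - σ c + σ c := add_le_add (hσ hv hc hvc) hr
    _ = c := sub_add_cancel c (σ c)

theorem stmt_2_general {α : Type*} [AddCommGroup α] [Preorder α] [IsOrderedAddMonoid α]
    {S : Set α} {ψ σ ψinv σinv : α → α} {r v : α}
    (hψ : ∀ s ∈ S, ψ s ≤ s) (hσ : MonotoneOn (fun s => s - σ s) S)
    (hψinv : Set.RightInvOn ψinv ψ S) (hψinv_maps : Set.MapsTo ψinv S S)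
    (hσinv : Set.RightInvOn σinv σ S) (hσinv_maps : Set.MapsTo σinv S S)
    (hr : r ∈ S) (hv : v ∈ S) (hvc : v ≤ σinv (ψinv r)) :
    v - σ v + r ≤ σinv (ψinv r) := by
  have hw : ψinv r ∈ S := hψinv_maps hr
  have hr_le : r ≤ σ (σinv (ψinv r)) :=
    calc
      r = ψ (ψinv r) := (hψinv hr).symm
      _ ≤ ψinv r := hψ _ hw
      _ = σ (σinv (ψinv r)) := (hσinv hw).symm
  exact sub_add_le_of_monotoneOn_id_sub hσ hv (hσinv_maps hw) hvc hr_le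

theorem ClassK.nonneg {f : ℝ → ℝ} (hf : ClassK f) {s : ℝ} (hs : 0 ≤ s) : 0 ≤ f s :=
  hf.2.2.symm.trans_le (hf.2.1.monotoneOn Set.self_mem_Ici hs hs)

/-- Let `ψ, σ̂` be class-K∞ with `id − ψ` class-K∞ and `id − σ̂` class-K. For `r ≥ 0` set
`c := σ̂⁻¹(ψ⁻¹(r))`. Then the sublevel set `{v : 0 ≤ v ≤ c}` is invariant under
`v ↦ v − σ̂(v) + r`, i.e. `v − σ̂(v) + r ≤ c` for all `0 ≤ v ≤ c`. -/
theorem stmt_2 (ψ σh ψinv σhinv : ℝ → ℝ)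
    (hψ : ClassKInf ψ) (hσh : ClassKInf σh)
    (hidψ : ClassKInf (fun s => s - ψ s))
    (hidσh : ClassK (fun s => s - σh s))
    -- `ψinv` is the inverse of `ψ` on `[0,∞)`
    (hψinv : ∀ s ≥ (0:ℝ), ψ (ψinv s) = s ∧ ψinv (ψ s) = s ∧ 0 ≤ ψinv s)
    -- `σhinv` is the inverse of `σ̂` on `[0,∞)`
    (hσhinv : ∀ s ≥ (0:ℝ), σh (σhinv s) = s ∧ σhinv (σh s) = s ∧ 0 ≤ σhinv s)
    (r : ℝ) (hr : 0 ≤ r) (c : ℝ) (hc : c = σhinv (ψinv r)) :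
    ∀ v : ℝ, 0 ≤ v → v ≤ c → v - σh v + r ≤ c := by
  subst hc
  exact fun v hv hvc => stmt_2_general (fun s hs => sub_nonneg.1 (hidψ.1.nonneg hs))
    hidσh.2.1.monotoneOn (fun s hs => (hψinv s hs).1) (fun s hs => (hψinv s hs).2.2)
    (fun s hs => (hσhinv s hs).1) (fun s hs => (hσhinv s hs).2.2) hr hv hvc
end

section
/- Let Σ = (X,U,f,Y,h) and Σ̂ = (X̂,Û,f̂,Ŷ,ĥ) be transition systems with Ŷ ⊆ Y, and let V be a simulation function from Σ̂ to Σ with lower-bound function α ∈ K∞. Let φ ≥ 0, γ_ext ∈ K∞ ∪ {0} and λ ∈ K∞ with λ(s) < s for s > 0 be such that for all x ∈ X, x̂ ∈ X̂, û ∈ Û there exists u ∈ U so that for all x_d ∈ f(x,u) there exists x̂_d ∈ f̂(x̂,û) with V(x_d,x̂_d) ≤ max{λ(V(x,x̂)), γ_ext(‖û‖) + φ}. Assume there is v > 0 with ‖û‖ ≤ v for all û ∈ Û. Then the relation R = {(x,x̂) ∈ X × X̂ : V(x,x̂) ≤ γ_ext(v) + φ} is an ε̂-approximate alternating simulation relation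 from Σ̂ to Σ with ε̂ = α⁻¹(γ_ext(v) + φ); that is, (i) for every (x,x̂) ∈ R, ‖h(x) − ĥ(x̂)‖ ≤ ε̂, and (ii) for every (x,x̂) ∈ R and every û ∈ Û there exists u ∈ U such that for every x_d ∈ f(x,u) there exists x̂_d ∈ f̂(x̂,û) with (x_d,x̂_d) ∈ R. -/
open Filter

/-!
`R` is the sublevel set of `V` at `c = γ_ext(v) + φ`. Since `λ(s) ≤ s` and `γ_ext(‖û‖) ≤ γ_ext(v)`,
both terms of the per-step maximum are at most `c` whenever `V(x,x̂) ≤ c`, so the sublevel set is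
preserved by the matched transitions. On it `α(‖h(x) - ĥ(x̂)‖) ≤ V(x,x̂) ≤ c`, and a strictly
increasing `α` reflects this inequality to `‖h(x) - ĥ(x̂)‖ ≤ α⁻¹(c)`.
-/

theorem ClassK.monotoneOn {f : ℝ → ℝ} (hf : ClassK f) : MonotoneOn f (Set.Ici 0) :=
  hf.2.1.monotoneOn

theorem monotoneOn_of_classK_or_eq_zero {f : ℝ → ℝ} (hf : ClassK f ∨ f = fun _ => 0) :
    MonotoneOn f (Set.Ici 0) := by
  rcases hf with hf | rfl
  · exact hf.monotoneOn
  · exact monotoneOn_const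

theorem le_self_of_forall_pos_lt_self {β : Type*} [PartialOrder β] [Zero β] {f : β → β}
    (hzero : f 0 = 0) (hlt : ∀ s > 0, f s < s) {s : β} (hs : 0 ≤ s) : f s ≤ s := by
  rcases hs.eq_or_lt with rfl | hpos
  · exact hzero.le
  · exact (hlt s hpos).le

theorem le_rightInv_of_strictMonoOn {β δ : Type*} [LinearOrder β] [Preorder δ]
    {α : β → δ} {αinv : δ → β} {s : Set β} {t : Set δ} (hα : StrictMonoOn α s)
    (hinv : Set.RightInvOn αinv α t) (hmaps : Set.MapsTo αinv t s)
    {a : β} {c : δ} (ha : a ∈ s) (hc : c ∈ t) (hac : α a ≤ c) : a ≤ αinv c :=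
  (hα.le_iff_le ha (hmaps hc)).1 (hac.trans_eq (hinv hc).symm)

section AlternatingSimulation

variable {X U Xh EU Y : Type*}

/-- `R` is an alternating simulation relation from the system with transition map `fh` and input
set `Uh` to the system with transition map `f`: each input of the former is matched by an input of
the latter, all of whose successors can be answered so as to remain in `R`. The inputs of `f` range
over a type, those of `fh` over a subset of a type that may carry a norm. -/
def IsAlternatingSimulation (Uh : Set EU) (f : X → U → Set X) (fh : Xh → EU → Set Xh)
    (R : Set (X × Xh)) : Prop :=
  ∀ p ∈ R, ∀ uh ∈ Uh, ∃ u : U, ∀ xd ∈ f p.1 u, ∃ xhd ∈ fh p.2 uh, (xd, xhd) ∈ R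

/-- An `ε`-approximate alternating simulation relation: an alternating simulation relation whose
pairs have outputs at distance at most `ε`. -/
structure IsApproxAlternatingSimulation [PseudoMetricSpace Y] (Uh : Set EU)
    (f : X → U → Set X) (fh : Xh → EU → Set Xh) (h : X → Y) (hh : Xh → Y)
    (ε : ℝ) (R : Set (X × Xh)) : Prop where
  dist_le : ∀ p ∈ R, dist (h p.1) (hh p.2) ≤ ε
  isAlternatingSimulation : IsAlternatingSimulation Uh f fh R

theorem isAlternatingSimulation_sublevel_of_le_max {β : Type*} [LinearOrder β]
    {Uh : Set EU} {f : X → U → Set X} {fh : Xh → EU → Set Xh}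
    {V : X → Xh → β} {lam : β → β} {gain : EU → β} {c : β}
    (hlam : ∀ x xh, V x xh ≤ c → lam (V x xh) ≤ c) (hgain : ∀ uh ∈ Uh, gain uh ≤ c)
    (hmax : ∀ x xh, ∀ uh ∈ Uh, ∃ u : U, ∀ xd ∈ f x u, ∃ xhd ∈ fh xh uh,
      V xd xhd ≤ max (lam (V x xh)) (gain uh)) :
    IsAlternatingSimulation Uh f fh {p | V p.1 p.2 ≤ c} := by
  rintro ⟨x, xh⟩ hp uh huh
  obtain ⟨u, hu⟩ := hmax x xh uh huh
  refine ⟨u, fun xd hxd => ?_⟩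
  obtain ⟨xhd, hxhd, hV⟩ := hu xd hxd
  exact ⟨xhd, hxhd, hV.trans (max_le (hlam x xh hp) (hgain uh huh))⟩

theorem dist_le_rightInv_of_mem_sublevel [PseudoMetricSpace Y] {h : X → Y} {hh : Xh → Y}
    {V : X → Xh → ℝ} {α αinv : ℝ → ℝ} (hα : StrictMonoOn α (Set.Ici 0))
    (hinv : Set.RightInvOn αinv α (Set.Ici 0))
    (hmaps : Set.MapsTo αinv (Set.Ici 0) (Set.Ici 0)) (hVnonneg : ∀ x xh, 0 ≤ V x xh)
    (hlower : ∀ x xh, α (dist (h x) (hh xh)) ≤ V x xh) {c : ℝ} {p : X × Xh}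
    (hp : p ∈ {p : X × Xh | V p.1 p.2 ≤ c}) : dist (h p.1) (hh p.2) ≤ αinv c := by
  have hc : 0 ≤ c := (hVnonneg p.1 p.2).trans hp
  exact le_rightInv_of_strictMonoOn hα hinv hmaps dist_nonneg hc ((hlower p.1 p.2).trans hp)

theorem stmt_4_general [SeminormedAddGroup EU] [PseudoMetricSpace Y]
    {Uh : Set EU} {f : X → U → Set X} {fh : Xh → EU → Set Xh} {h : X → Y} {hh : Xh → Y}
    {V : X → Xh → ℝ} (hVnonneg : ∀ x xh, 0 ≤ V x xh)
    {α αinv : ℝ → ℝ} (hα : StrictMonoOn α (Set.Ici 0))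
    (hinv : Set.RightInvOn αinv α (Set.Ici 0))
    (hmaps : Set.MapsTo αinv (Set.Ici 0) (Set.Ici 0))
    (hlower : ∀ x xh, α (dist (h x) (hh xh)) ≤ V x xh)
    {γext lam : ℝ → ℝ} {φ v : ℝ} (hγ : MonotoneOn γext (Set.Ici 0))
    (hlam : ∀ s ≥ 0, lam s ≤ s)
    (hmax : ∀ x xh, ∀ uh ∈ Uh, ∃ u : U, ∀ xd ∈ f x u, ∃ xhd ∈ fh xh uh,
      V xd xhd ≤ max (lam (V x xh)) (γext ‖uh‖ + φ))
    (hUb : ∀ uh ∈ Uh, ‖uh‖ ≤ v) :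
    IsApproxAlternatingSimulation Uh f fh h hh (αinv (γext v + φ))
      {p | V p.1 p.2 ≤ γext v + φ} where
  dist_le _ hp := dist_le_rightInv_of_mem_sublevel hα hinv hmaps hVnonneg hlower hp
  isAlternatingSimulation := by
    have hgain : ∀ uh ∈ Uh, γext ‖uh‖ + φ ≤ γext v + φ := by
      intro uh huh
      have hv : 0 ≤ v := (norm_nonneg uh).trans (hUb uh huh)
      gcongr
      exact hγ (norm_nonneg uh) hv (hUb uh huh)
    exact isAlternatingSimulation_sublevel_of_le_max
      (fun x xh hV => (hlam _ (hVnonneg x xh)).trans hV) hgain hmax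

end AlternatingSimulation

/-- If `V` is a simulation function from `Σ̂` to `Σ` with lower-bound function `α ∈ K∞`,
satisfying the per-step bound `V(x_d,x̂_d) ≤ max{λ(V(x,x̂)), γ_ext(‖û‖) + φ}`, and all
inputs of `Σ̂` are bounded by `v`, then
`R = {(x,x̂) : V(x,x̂) ≤ γ_ext(v) + φ}` is an `ε̂`-approximate alternating simulation
relation from `Σ̂` to `Σ` with `ε̂ = α⁻¹(γ_ext(v) + φ)`. -/
theorem stmt_4
    {X U Xh : Type*} {EU EY : Type*}
    [NormedAddCommGroup EU] [NormedAddCommGroup EY]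
    [TopologicalSpace X] [TopologicalSpace Xh]
    (Uh : Set EU)
    (f : X → U → Set X) (fh : Xh → EU → Set Xh)
    (h : X → EY) (hh : Xh → EY)
    (V : X → Xh → ℝ)
    (hVcont : Continuous fun p : X × Xh => V p.1 p.2)
    (hVnonneg : ∀ x xh, 0 ≤ V x xh)
    (α αinv σV ρext : ℝ → ℝ) (εV : ℝ)
    (hα : ClassKInf α) (hσV : ClassKInf σV)
    (hρ : ClassKInf ρext ∨ ρext = fun _ => 0) (hεV : 0 ≤ εV)
    -- `αinv` is the inverse of `α` on `[0,∞)`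
    (hαinv : ∀ s ≥ (0:ℝ), α (αinv s) = s ∧ αinv (α s) = s ∧ 0 ≤ αinv s)
    -- simulation function condition (i): lower bound
    (hV1 : ∀ x xh, α ‖h x - hh xh‖ ≤ V x xh)
    -- simulation function condition (ii): decrease condition of Definition 3
    (hV2 : ∀ x xh, ∀ uh ∈ Uh, ∃ u : U, ∀ xd ∈ f x u, ∃ xhd ∈ fh xh uh,
      V xd xhd - V x xh ≤ -σV (V x xh) + ρext ‖uh‖ + εV)
    (φ : ℝ) (hφ : 0 ≤ φ)
    (γext : ℝ → ℝ) (hγ : ClassKInf γext ∨ γext = fun _ => 0)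
    (lam : ℝ → ℝ) (hlam : ClassKInf lam) (hlamlt : ∀ s > (0:ℝ), lam s < s)
    -- per-step max bound
    (hmax : ∀ x xh, ∀ uh ∈ Uh, ∃ u : U, ∀ xd ∈ f x u, ∃ xhd ∈ fh xh uh,
      V xd xhd ≤ max (lam (V x xh)) (γext ‖uh‖ + φ))
    (v : ℝ) (hv : 0 < v) (hUb : ∀ uh ∈ Uh, ‖uh‖ ≤ v)
    (R : Set (X × Xh)) (hR : R = {p : X × Xh | V p.1 p.2 ≤ γext v + φ})
    (εh : ℝ) (hεh : εh = αinv (γext v + φ)) :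
    (∀ p ∈ R, ‖h p.1 - hh p.2‖ ≤ εh) ∧
      (∀ p ∈ R, ∀ uh ∈ Uh, ∃ u : U, ∀ xd ∈ f p.1 u, ∃ xhd ∈ fh p.2 uh,
        (xd, xhd) ∈ R) := by
  subst hR hεh
  simp only [← dist_eq_norm] at hV1 ⊢
  obtain ⟨hdist, hsim⟩ := stmt_4_general hVnonneg hα.1.2.1 (fun s hs => (hαinv s hs).1)
    (fun s hs => (hαinv s hs).2.2) hV1 (monotoneOn_of_classK_or_eq_zero (hγ.imp_left And.left))
    (fun _ => le_self_of_forall_pos_lt_self hlam.1.2.2 hlamlt) hmax hUb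
  exact ⟨hdist, hsim⟩
end
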